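/- Let m,n ≥ 2 and let k be an integer with ⌈m/min(m,n)⌉ ≤ k ≤ m. Then the extreme points of L_{m,n} lying in L_{m,n,k} are dense in L_{m,n,k}: for every quantum channel L with rank Z(L) ≤ k and every ε > 0 there exists an extreme point L' of L_{m,n} with rank Z(L') ≤ k and ‖Z(L') − Z(L)‖ < ε. -/

import Mathlib

open Matrix
open scoped ComplexOrder

/-- The Choi matrix of a linear map `L` from `m × m` to `n × n` complex matrices:
its `((i,p),(j,q))` entry is the `(p,q)` entry of `L(E_{ij})`. -/
def choi (m n : ℕ) (L : Matrix (Fin m) (Fin m) ℂ →ₗ[ℂ] Matrix (Fin n) (Fin n) ℂ) :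
    Matrix (Fin m × Fin n) (Fin m × Fin n) ℂ :=
  Matrix.of fun ip jq => L (Matrix.single ip.1 jq.1 (1 : ℂ)) ip.2 jq.2

/-- `L` is a quantum channel: it admits a Kraus representation
`L(X) = ∑ Aᵢ X Aᵢ*` with `∑ Aᵢ* Aᵢ = I`. -/
def IsChannel (m n : ℕ) (L : Matrix (Fin m) (Fin m) ℂ →ₗ[ℂ] Matrix (Fin n) (Fin n) ℂ) : Prop :=
  ∃ (k : ℕ) (A : Fin k → Matrix (Fin n) (Fin m) ℂ),
    (∀ X, L X = ∑ i, A i * X * (A i)ᴴ) ∧ ∑ i, (A i)ᴴ * A i = 1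

/-- `L` is an extreme point of the convex set of quantum channels. -/
def IsExtremeChannel (m n : ℕ)
    (L : Matrix (Fin m) (Fin m) ℂ →ₗ[ℂ] Matrix (Fin n) (Fin n) ℂ) : Prop :=
  IsChannel m n L ∧
    ∀ L₁ L₂ : Matrix (Fin m) (Fin m) ℂ →ₗ[ℂ] Matrix (Fin n) (Fin n) ℂ,
      IsChannel m n L₁ → IsChannel m n L₂ → ∀ t : ℝ, 0 < t → t < 1 →
      L = (t : ℂ) • L₁ + ((1 - t : ℝ) : ℂ) • L₂ → L₁ = L ∧ L₂ = L

attribute [local instance] Matrix.frobeniusNormedAddCommGroup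

/-!
Write a channel of Choi rank at most `k` with exactly `k` Kraus operators `A a`. If the `k ^ 2`
products `(A a)ᴴ * A b` are linearly independent then the channel is extreme: by Douglas'
factorization the Kraus operators of any channel in a convex decomposition of it are linear
combinations `B c = ∑ a, G a c • A a`, and comparing `∑ c, (B c)ᴴ * B c = 1` with
`∑ a, (A a)ᴴ * A a = 1` forces `G * Gᴴ = 1`, so both channels agree. Independence of the products is
generic because `k ≤ m`: the matrix units `E a = single p (e a) 1` have independent products, and
along the segment from `A` to `E` the products are polynomial in the parameter, so they are
dependent for only finitely many parameters. Multiplying a nearby independent family on the right by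
the inverse square root of its sum `∑ a, (B a)ᴴ * B a`, which is close to `1`, restores trace
preservation and keeps the products independent.
-/

open Filter Topology

section LinearAlgebra

lemma exists_comp_eq_of_ker_le_ker {K V W U : Type*} [Field K] [AddCommGroup V] [Module K V]
    [AddCommGroup W] [Module K W] [AddCommGroup U] [Module K U] {f : V →ₗ[K] W} {g : V →ₗ[K] U}
    (h : LinearMap.ker f ≤ LinearMap.ker g) : ∃ φ : W →ₗ[K] U, φ ∘ₗ f = g := by
  obtain ⟨s, hs⟩ := f.rangeRestrict.exists_rightInverse_of_surjective f.range_rangeRestrict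
  obtain ⟨φ, hφ⟩ := (g ∘ₗ s).exists_extend
  refine ⟨φ, LinearMap.ext fun x => ?_⟩
  have hfs : f (s (f.rangeRestrict x)) = f x :=
    congrArg Subtype.val (LinearMap.congr_fun hs (f.rangeRestrict x))
  calc φ (f x) = g (s (f.rangeRestrict x)) := LinearMap.congr_fun hφ (f.rangeRestrict x)
    _ = g x := LinearMap.sub_mem_ker_iff.1 (h (LinearMap.sub_mem_ker_iff.2 hfs))

lemma eventually_cofinite_linearIndependent_sum_pow_smul {K V ι : Type*} [Field K]
    [AddCommGroup V] [Module K V] [Finite ι] {d : ℕ} {c : Fin d → ι → V} {t₀ : K}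
    (h : LinearIndependent K fun i => ∑ j : Fin d, t₀ ^ (j : ℕ) • c j i) :
    ∀ᶠ t : K in cofinite, LinearIndependent K fun i => ∑ j : Fin d, t ^ (j : ℕ) • c j i := by
  classical
  cases nonempty_fintype ι
  obtain ⟨r, hr⟩ := (Fintype.linearCombination K
    fun i => ∑ j : Fin d, t₀ ^ (j : ℕ) • c j i).exists_leftInverse_of_injective
      (LinearMap.ker_eq_bot.2 (linearIndependent_iff_injective_fintypeLinearCombination.1 h))
  let N : Matrix ι ι (Polynomial K) :=
    Matrix.of fun i l => ∑ j, Polynomial.C (r (c j i) l) * Polynomial.X ^ (j : ℕ)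
  have hN (t : K) : N.det.eval t =
      (Matrix.of fun i => r (∑ j : Fin d, t ^ (j : ℕ) • c j i)).det := by
    rw [← Polynomial.coe_evalRingHom, RingHom.map_det]
    congr 1
    ext i l
    simp [N, Polynomial.eval_finsetSum, mul_comm (_ ^ _)]
  have hN_base : (Matrix.of fun i => r (∑ j : Fin d, t₀ ^ (j : ℕ) • c j i)) = 1 := by
    ext i l
    simpa [Matrix.one_apply, Pi.single_apply, eq_comm] using
      congrFun (LinearMap.congr_fun hr (Pi.single i 1)) l
  have hN_ne_zero : N.det ≠ 0 := by
    intro h0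
    have := hN t₀
    rw [h0, hN_base, Matrix.det_one, Polynomial.eval_zero] at this
    exact zero_ne_one this
  filter_upwards [(Polynomial.finite_setOfPred_isRoot hN_ne_zero).compl_mem_cofinite] with t ht
  exact .of_comp r (Matrix.linearIndependent_rows_of_det_ne_zero (hN t ▸ ht))

lemma exists_linearIsometry_of_finrank_le {𝕜 V W : Type*} [RCLike 𝕜]
    [NormedAddCommGroup V] [InnerProductSpace 𝕜 V] [FiniteDimensional 𝕜 V]
    [NormedAddCommGroup W] [InnerProductSpace 𝕜 W] [FiniteDimensional 𝕜 W]
    (h : Module.finrank 𝕜 V ≤ Module.finrank 𝕜 W) : Nonempty (V →ₗᵢ[𝕜] W) := by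
  let v := stdOrthonormalBasis 𝕜 V
  let w := stdOrthonormalBasis 𝕜 W
  let f : V →ₗ[𝕜] W := v.toBasis.constr 𝕜 (w ∘ Fin.castLE h)
  have hf : f ∘ v.toBasis = w ∘ Fin.castLE h := funext fun i => v.toBasis.constr_basis 𝕜 _ i
  refine ⟨f.isometryOfOrthonormal (v := v.toBasis) (by simp [v.orthonormal]) ?_⟩
  rw [hf]
  exact w.orthonormal.comp _ (Fin.castLE_injective h)

lemma exists_inner_eq_of_finrank_span_le {𝕜 V W ι : Type*} [RCLike 𝕜] [Finite ι]
    [NormedAddCommGroup V] [InnerProductSpace 𝕜 V]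
    [NormedAddCommGroup W] [InnerProductSpace 𝕜 W] [FiniteDimensional 𝕜 W] {v : ι → V}
    (h : Module.finrank 𝕜 (Submodule.span 𝕜 (Set.range v)) ≤ Module.finrank 𝕜 W) :
    ∃ w : ι → W, ∀ i j, inner 𝕜 (w i) (w j) = inner 𝕜 (v i) (v j) := by
  have := FiniteDimensional.span_of_finite 𝕜 (Set.finite_range v)
  obtain ⟨φ⟩ := exists_linearIsometry_of_finrank_le h
  exact ⟨fun i => φ ⟨v i, Submodule.subset_span (Set.mem_range_self i)⟩,
    fun i j => φ.inner_map_map _ _⟩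

end LinearAlgebra

section Factorization

variable {𝕜 ι κ μ : Type*} [RCLike 𝕜] [Fintype κ] [Fintype μ]

lemma exists_mul_conjTranspose_eq_of_rank_le [Finite ι] (Q : Matrix ι μ 𝕜)
    (hQ : Q.rank ≤ Fintype.card κ) : ∃ F : Matrix ι κ 𝕜, F * Fᴴ = Q * Qᴴ := by
  let q (i : ι) : EuclideanSpace 𝕜 μ := WithLp.toLp 2 (Q i)
  have hq : Submodule.span 𝕜 (Set.range q) = (Submodule.span 𝕜 (Set.range Q.row)).map
      (WithLp.linearEquiv 2 𝕜 (μ → 𝕜)).symm.toLinearMap := by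
    rw [Submodule.map_span, ← Set.range_comp]
    rfl
  obtain ⟨f, hf⟩ := exists_inner_eq_of_finrank_span_le (W := EuclideanSpace 𝕜 κ) (v := q) <| by
    rwa [hq, LinearEquiv.finrank_map_eq, ← Matrix.rank_eq_finrank_span_row,
      finrank_euclideanSpace]
  refine ⟨Matrix.of fun i => (f i).ofLp, ?_⟩
  ext i j
  simpa [q, Matrix.mul_apply, PiLp.inner_apply] using hf j i

lemma exists_eq_mul_of_posSemidef_sub [Finite ι] {C : Matrix ι κ 𝕜} {D : Matrix ι μ 𝕜} {c : 𝕜}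
    (hc : 0 < c) (h : (C * Cᴴ - c • (D * Dᴴ)).PosSemidef) : ∃ G : Matrix κ μ 𝕜, D = C * G := by
  classical
  cases nonempty_fintype ι
  have hker : LinearMap.ker Cᴴ.mulVecLin ≤ LinearMap.ker Dᴴ.mulVecLin := by
    intro x hx
    rw [LinearMap.mem_ker, Matrix.mulVecLin_apply] at hx ⊢
    have hnonneg : 0 ≤ -(c * (star (Dᴴ *ᵥ x) ⬝ᵥ (Dᴴ *ᵥ x))) := by
      have := h.dotProduct_mulVec_nonneg x
      simpa [Matrix.sub_mulVec, Matrix.smul_mulVec, ← Matrix.mulVec_mulVec, hx,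
        Matrix.dotProduct_mulVec, Matrix.star_mulVec] using this
    have hzero : c * (star (Dᴴ *ᵥ x) ⬝ᵥ (Dᴴ *ᵥ x)) = 0 :=
      le_antisymm (neg_nonneg.1 hnonneg) (mul_nonneg hc.le (dotProduct_star_self_nonneg _))
    exact dotProduct_star_self_eq_zero.1 ((mul_eq_zero.1 hzero).resolve_left hc.ne')
  obtain ⟨φ, hφ⟩ := exists_comp_eq_of_ker_le_ker hker
  refine ⟨(LinearMap.toMatrix' φ)ᴴ, Matrix.conjTranspose_injective ?_⟩
  have := congrArg LinearMap.toMatrix' hφ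
  simpa [LinearMap.toMatrix'_comp, ← Matrix.toLin'_apply'] using this.symm

end Factorization

section InverseSquareRoot

lemma exists_tendsto_star_mul_mul_eq_one (A : Type*) [CStarAlgebra A] [PartialOrder A]
    [StarOrderedRing A] : ∃ T : A → A, Tendsto T (𝓝[Set.Ici 0] 1) (𝓝 1) ∧
      ∀ᶠ a in 𝓝[Set.Ici 0] 1, star (T a) * a * T a = 1 := by
  have hpos : ∀ᶠ a : A in 𝓝[Set.Ici 0] 1, IsStrictlyPositive a := by
    filter_upwards [self_mem_nhdsWithin, nhdsWithin_le_nhds (Units.nhds 1)] with a h0 hunit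
    exact IsUnit.isStrictlyPositive hunit h0
  refine ⟨fun a => a ^ (-(1 / 2) : ℝ), ?_, ?_⟩
  · have hcont := CFC.continuousOn_rpow (A := A) (-(1 / 2)) 1 isStrictlyPositive_one
    have := hcont.tendsto.mono_left (le_inf nhdsWithin_le_nhds (le_principal_iff.2 hpos))
    rwa [CFC.one_rpow] at this
  · filter_upwards [hpos] with a ha
    rw [(IsSelfAdjoint.of_nonneg CFC.rpow_nonneg).star_eq]
    exact CFC.conjugate_rpow_neg_one_half a

open scoped Matrix.Norms.L2Operator MatrixOrder in
lemma exists_tendsto_conjTranspose_mul_mul_eq_one (m : Type*) [Fintype m] [DecidableEq m] :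
    ∃ T : Matrix m m ℂ → Matrix m m ℂ, Tendsto T (𝓝[{S | S.PosSemidef}] 1) (𝓝 1) ∧
      ∀ᶠ S in 𝓝[{S | S.PosSemidef}] 1, (T S)ᴴ * S * T S = 1 := by
  have hIci : {S : Matrix m m ℂ | S.PosSemidef} = Set.Ici 0 :=
    Set.ext fun _ => Matrix.nonneg_iff_posSemidef.symm
  rw [hIci]
  exact exists_tendsto_star_mul_mul_eq_one (Matrix m m ℂ)

end InverseSquareRoot

section Kraus

variable {m n κ μ : Type*}

/-- The completely positive map with Kraus operators `A a`. -/
def krausMap [Fintype m] [Fintype κ] (A : κ → Matrix n m ℂ) : Matrix m m ℂ →ₗ[ℂ] Matrix n n ℂ where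
  toFun X := ∑ a, A a * X * (A a)ᴴ
  map_add' X Y := by simp only [Matrix.mul_add, Matrix.add_mul, Finset.sum_add_distrib]
  map_smul' c X := by
    simp only [Matrix.mul_smul, Matrix.smul_mul, Finset.smul_sum, RingHom.id_apply]

/-- The matrix whose columns are the vectorised Kraus operators `A a`, indexed as in `choi`. -/
def krausStack (A : κ → Matrix n m ℂ) : Matrix (m × n) κ ℂ :=
  Matrix.of fun ip a => A a ip.2 ip.1

/-- Choi's criterion: the products `(A a)ᴴ * A b` are linearly independent. -/
def KrausIndependent [Fintype n] (A : κ → Matrix n m ℂ) : Prop :=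
  LinearIndependent ℂ fun ab : κ × κ => (A ab.1)ᴴ * A ab.2

lemma krausMap_apply [Fintype m] [Fintype κ] (A : κ → Matrix n m ℂ) (X : Matrix m m ℂ) :
    krausMap A X = ∑ a, A a * X * (A a)ᴴ :=
  rfl

lemma trace_krausMap [Fintype m] [Fintype n] [Fintype κ] (A : κ → Matrix n m ℂ)
    (X : Matrix m m ℂ) :
    (krausMap A X).trace = ((∑ a, (A a)ᴴ * A a) * X).trace := by
  simp only [krausMap_apply, Matrix.trace_sum, Matrix.sum_mul]
  exact Finset.sum_congr rfl fun a _ => Matrix.trace_mul_cycle _ _ _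

lemma sum_conjTranspose_mul_self_congr [Fintype m] [Fintype n] [Fintype κ] [Fintype μ]
    {A : κ → Matrix n m ℂ} {B : μ → Matrix n m ℂ} (h : krausMap A = krausMap B) :
    ∑ a, (A a)ᴴ * A a = ∑ b, (B b)ᴴ * B b :=
  Matrix.ext_iff_trace_mul_right.2 fun X => by rw [← trace_krausMap, h, trace_krausMap]

lemma krausStack_surjective :
    Function.Surjective (krausStack : (κ → Matrix n m ℂ) → Matrix (m × n) κ ℂ) :=
  fun F => ⟨fun a => Matrix.of fun p i => F (i, p) a, rfl⟩

lemma eq_sum_smul_of_krausStack_eq_mul [Fintype κ] {A : κ → Matrix n m ℂ}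
    {B : μ → Matrix n m ℂ} {G : Matrix κ μ ℂ} (h : krausStack B = krausStack A * G) (c : μ) :
    B c = ∑ a, G a c • A a := by
  ext p i
  simpa [krausStack, Matrix.mul_apply, Matrix.sum_apply, mul_comm]
    using congrFun (congrFun h (i, p)) c

lemma sum_conjTranspose_mul_self_of_krausStack_eq_mul [Fintype n] [Fintype κ] [Fintype μ]
    {A : κ → Matrix n m ℂ} {B : μ → Matrix n m ℂ} {G : Matrix κ μ ℂ}
    (h : krausStack B = krausStack A * G) :
    ∑ c, (B c)ᴴ * B c = ∑ ab : κ × κ, (G * Gᴴ) ab.2 ab.1 • ((A ab.1)ᴴ * A ab.2) := by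
  have hterm (c : μ) : (B c)ᴴ * B c =
      ∑ ab : κ × κ, (G ab.2 c * star (G ab.1 c)) • ((A ab.1)ᴴ * A ab.2) := by
    rw [eq_sum_smul_of_krausStack_eq_mul h c, Matrix.conjTranspose_sum, Matrix.sum_mul,
      Fintype.sum_prod_type]
    simp only [Matrix.mul_sum, Matrix.conjTranspose_smul, Matrix.smul_mul, Matrix.mul_smul,
      smul_smul]
  simp only [hterm, Matrix.mul_apply, Matrix.conjTranspose_apply, Finset.sum_smul]
  exact Finset.sum_comm

namespace KrausIndependent

variable [Fintype n] {A : κ → Matrix n m ℂ}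

lemma mul_conjTranspose_eq_one [Fintype κ] [Fintype μ] [DecidableEq κ] (hA : KrausIndependent A)
    {B : μ → Matrix n m ℂ} {G : Matrix κ μ ℂ} (h : krausStack B = krausStack A * G)
    (hsum : ∑ b, (B b)ᴴ * B b = ∑ a, (A a)ᴴ * A a) : G * Gᴴ = 1 := by
  have hA_sum : ∑ a, (A a)ᴴ * A a =
      ∑ ab : κ × κ, (1 : Matrix κ κ ℂ) ab.2 ab.1 • ((A ab.1)ᴴ * A ab.2) := by
    simp [Fintype.sum_prod_type, Matrix.one_apply, ite_smul]
  rw [sum_conjTranspose_mul_self_of_krausStack_eq_mul h, hA_sum] at hsum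
  ext b a
  exact congrFun (hA.fintypeLinearCombination_injective hsum) (a, b)

lemma mul_right [Fintype m] [DecidableEq m] (hA : KrausIndependent A) {T : Matrix m m ℂ}
    (hT : IsUnit T) : KrausIndependent fun a => A a * T := by
  let f : Matrix m m ℂ →ₗ[ℂ] Matrix m m ℂ := LinearMap.mulLeft ℂ Tᴴ ∘ₗ LinearMap.mulRight ℂ T
  have hf : Function.Injective f := fun X Y h =>
    hT.mul_right_cancel ((IsUnit.star hT).mul_left_cancel h)
  have hfA : (fun ab : κ × κ => (A ab.1 * T)ᴴ * (A ab.2 * T)) =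
      f ∘ fun ab => (A ab.1)ᴴ * A ab.2 :=
    funext fun ab => by simp [f, Matrix.mul_assoc]
  rw [KrausIndependent, hfA]
  exact hA.map' f (LinearMap.ker_eq_bot.2 hf)

end KrausIndependent

lemma krausIndependent_single [Finite m] [Fintype n] [DecidableEq m] [DecidableEq n] (p : n)
    (e : κ ↪ m) : KrausIndependent fun a => Matrix.single p (e a) (1 : ℂ) := by
  cases nonempty_fintype m
  have hprod (ab : κ × κ) : (Matrix.single p (e ab.1) (1 : ℂ))ᴴ * Matrix.single p (e ab.2) (1 : ℂ) =
      Matrix.stdBasis ℂ m m (e ab.1, e ab.2) := by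
    simp [Matrix.stdBasis_eq_single]
  simp only [KrausIndependent, hprod]
  exact (Matrix.stdBasis ℂ m m).linearIndependent.comp _ (e.prodMap e).injective

lemma KrausIndependent.eventually_lineMap [Fintype n] [Finite κ] {E : κ → Matrix n m ℂ}
    (hE : KrausIndependent E) (A : κ → Matrix n m ℂ) :
    ∀ᶠ t : ℝ in cofinite, KrausIndependent (AffineMap.lineMap A E t) := by
  let D := E - A
  let c : Fin 3 → κ × κ → Matrix m m ℂ :=
    ![fun ab => (A ab.1)ᴴ * A ab.2,
      fun ab => (A ab.1)ᴴ * D ab.2 + (D ab.1)ᴴ * A ab.2,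
      fun ab => (D ab.1)ᴴ * D ab.2]
  have hc (t : ℝ) (ab : κ × κ) :
      (AffineMap.lineMap A E t ab.1)ᴴ * AffineMap.lineMap A E t ab.2 =
        ∑ j : Fin 3, (t : ℂ) ^ (j : ℕ) • c j ab := by
    have hline (a : κ) : AffineMap.lineMap A E t a = A a + (t : ℂ) • D a := by
      simp [D, AffineMap.lineMap_apply_module', add_comm, Complex.coe_smul]
    calc (AffineMap.lineMap A E t ab.1)ᴴ * AffineMap.lineMap A E t ab.2
        = (t : ℂ) ^ 0 • ((A ab.1)ᴴ * A ab.2) +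
            (t : ℂ) ^ 1 • ((A ab.1)ᴴ * D ab.2 + (D ab.1)ᴴ * A ab.2) +
            (t : ℂ) ^ 2 • ((D ab.1)ᴴ * D ab.2) := by
          simp only [hline, Matrix.conjTranspose_add, Matrix.conjTranspose_smul, Complex.star_def,
            Complex.conj_ofReal, Matrix.add_mul, Matrix.mul_add, Matrix.smul_mul, Matrix.mul_smul]
          module
      _ = ∑ j : Fin 3, (t : ℂ) ^ (j : ℕ) • c j ab := by
          rw [Fin.sum_univ_three]
          rfl
  have hone : LinearIndependent ℂ fun ab => ∑ j : Fin 3, ((1 : ℝ) : ℂ) ^ (j : ℕ) • c j ab := by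
    simpa only [KrausIndependent, ← hc, AffineMap.lineMap_apply_one] using hE
  filter_upwards [Complex.ofReal_injective.tendsto_cofinite.eventually
    (eventually_cofinite_linearIndependent_sum_pow_smul hone)] with t ht
  simpa only [KrausIndependent, hc] using ht

lemma dense_krausIndependent [Finite m] [Fintype n] [Nonempty n] [Finite κ] (e : κ ↪ m) :
    Dense {A : κ → Matrix n m ℂ | KrausIndependent A} := by
  classical
  intro A
  have hE := krausIndependent_single (Classical.arbitrary n) e
  have hline : Tendsto (fun t : ℝ => AffineMap.lineMap A
      (fun a => Matrix.single (Classical.arbitrary n) (e a) (1 : ℂ)) t) (𝓝[≠] 0) (𝓝 A) := by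
    refine Tendsto.mono_left ?_ nhdsWithin_le_nhds
    simpa using (AffineMap.lineMap_continuous (R := ℝ)).tendsto (0 : ℝ)
  exact mem_closure_of_tendsto hline
    ((hE.eventually_lineMap A).filter_mono (nhdsNE_le_cofinite 0))

lemma exists_tendsto_normalization [Fintype m] [DecidableEq m] [Fintype n] [Fintype κ]
    {A : κ → Matrix n m ℂ} (hA : ∑ a, (A a)ᴴ * A a = 1) :
    ∃ T : (κ → Matrix n m ℂ) → Matrix m m ℂ, Tendsto T (𝓝 A) (𝓝 1) ∧
      ∀ᶠ B in 𝓝 A, IsUnit (T B) ∧ ∑ a, (B a * T B)ᴴ * (B a * T B) = 1 := by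
  obtain ⟨T, hT, hTS⟩ := exists_tendsto_conjTranspose_mul_mul_eq_one m
  let S (B : κ → Matrix n m ℂ) : Matrix m m ℂ := ∑ a, (B a)ᴴ * B a
  have hS : Tendsto S (𝓝 A) (𝓝[{S | S.PosSemidef}] 1) := by
    refine tendsto_nhdsWithin_iff.2 ⟨?_, .of_forall fun B => Matrix.posSemidef_sum _
      fun a _ => Matrix.posSemidef_conjTranspose_mul_self _⟩
    have hcont : Continuous S := by fun_prop
    simpa only [S, hA] using hcont.tendsto A
  refine ⟨T ∘ S, hT.comp hS, ?_⟩
  filter_upwards [hS.eventually hTS] with B hB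
  refine ⟨IsUnit.of_mul_eq_one_right _ hB, ?_⟩
  simpa only [Function.comp_apply, S, Matrix.conjTranspose_mul, Matrix.mul_sum, Matrix.sum_mul,
    Matrix.mul_assoc] using hB

lemma mem_closure_krausIndependent [Finite m] [DecidableEq m] [Fintype n] [Nonempty n]
    [Fintype κ] (e : κ ↪ m) {A : κ → Matrix n m ℂ} (hA : ∑ a, (A a)ᴴ * A a = 1) :
    A ∈ closure {B : κ → Matrix n m ℂ | KrausIndependent B ∧ ∑ a, (B a)ᴴ * B a = 1} := by
  cases nonempty_fintype m
  obtain ⟨T, hT, hTunit⟩ := exists_tendsto_normalization hA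
  have : (𝓝[{B | KrausIndependent B}] A).NeBot :=
    mem_closure_iff_nhdsWithin_neBot.1 (dense_krausIndependent e A)
  have hmul : Tendsto (fun B a => B a * T B) (𝓝 A) (𝓝 A) := by
    have hcont : Continuous fun BT : (κ → Matrix n m ℂ) × Matrix m m ℂ =>
        fun a => BT.1 a * BT.2 := by fun_prop
    simpa [Function.comp_def] using (hcont.tendsto (A, 1)).comp (tendsto_id.prodMk_nhds hT)
  refine mem_closure_of_tendsto (b := 𝓝[{B | KrausIndependent B}] A)
    (hmul.mono_left nhdsWithin_le_nhds) ?_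
  filter_upwards [self_mem_nhdsWithin, nhdsWithin_le_nhds hTunit] with B hB hTB
  exact ⟨hB.mul_right hTB.1, hTB.2⟩

end Kraus

section Channel

variable {m n : ℕ} {κ : Type*} [Fintype κ]
  {L : Matrix (Fin m) (Fin m) ℂ →ₗ[ℂ] Matrix (Fin n) (Fin n) ℂ}

lemma choi_injective : Function.Injective (choi m n) := by
  intro L₁ L₂ h
  refine Matrix.ext_linearMap ℂ fun i j => LinearMap.ext_ring ?_
  ext p q
  simpa [choi] using congrFun (congrFun h (i, p)) (j, q)

lemma choi_krausMap (A : κ → Matrix (Fin n) (Fin m) ℂ) :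
    choi m n (krausMap A) = krausStack A * (krausStack A)ᴴ := by
  ext ⟨i, p⟩ ⟨j, q⟩
  simp [choi, krausMap_apply, krausStack, Matrix.sum_apply, Matrix.mul_apply, Matrix.single_apply,
    ite_and]

lemma rank_choi_krausMap_le (A : κ → Matrix (Fin n) (Fin m) ℂ) :
    (choi m n (krausMap A)).rank ≤ Fintype.card κ := by
  rw [choi_krausMap, Matrix.rank_self_mul_conjTranspose]
  exact Matrix.rank_le_card_width _

lemma continuous_choi_krausMap :
    Continuous fun A : κ → Matrix (Fin n) (Fin m) ℂ => choi m n (krausMap A) := by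
  have hstack : Continuous (krausStack : (κ → Matrix (Fin n) (Fin m) ℂ) → _) :=
    continuous_matrix fun ip a => (continuous_apply a).matrix_elem ip.2 ip.1
  simpa only [choi_krausMap] using hstack.matrix_mul hstack.matrix_conjTranspose

lemma IsChannel.exists_krausMap (hL : IsChannel m n L) :
    ∃ (k : ℕ) (A : Fin k → Matrix (Fin n) (Fin m) ℂ),
      L = krausMap A ∧ ∑ a, (A a)ᴴ * A a = 1 := by
  obtain ⟨k, A, hLA, hA⟩ := hL
  exact ⟨k, A, LinearMap.ext hLA, hA⟩

lemma IsChannel.posSemidef_choi (hL : IsChannel m n L) : (choi m n L).PosSemidef := by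
  obtain ⟨k, A, rfl, -⟩ := hL.exists_krausMap
  rw [choi_krausMap]
  exact Matrix.posSemidef_self_mul_conjTranspose _

lemma isChannel_krausMap {A : κ → Matrix (Fin n) (Fin m) ℂ} (hA : ∑ a, (A a)ᴴ * A a = 1) :
    IsChannel m n (krausMap A) := by
  let e := (Fintype.equivFin κ).symm
  refine ⟨Fintype.card κ, A ∘ e, fun X => ?_, ?_⟩
  · exact (e.sum_comp fun a => A a * X * (A a)ᴴ).symm
  · exact (e.sum_comp fun a => (A a)ᴴ * A a).trans hA

lemma IsChannel.exists_krausMap_of_rank_le (hL : IsChannel m n L)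
    (hrank : (choi m n L).rank ≤ Fintype.card κ) :
    ∃ A : κ → Matrix (Fin n) (Fin m) ℂ, L = krausMap A ∧ ∑ a, (A a)ᴴ * A a = 1 := by
  obtain ⟨k, B, rfl, hB⟩ := hL.exists_krausMap
  rw [choi_krausMap, Matrix.rank_self_mul_conjTranspose] at hrank
  obtain ⟨F, hF⟩ := exists_mul_conjTranspose_eq_of_rank_le (krausStack B) hrank
  obtain ⟨A, rfl⟩ := krausStack_surjective F
  have hAB : krausMap A = krausMap B := by
    apply choi_injective
    rw [choi_krausMap, choi_krausMap, hF]
  exact ⟨A, hAB.symm, (sum_conjTranspose_mul_self_congr hAB).trans hB⟩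

namespace KrausIndependent

variable {A : κ → Matrix (Fin n) (Fin m) ℂ}

lemma eq_krausMap_of_posSemidef_sub (hA : KrausIndependent A) (hA_one : ∑ a, (A a)ᴴ * A a = 1)
    (hL : IsChannel m n L) {c : ℂ} (hc : 0 < c)
    (h : (choi m n (krausMap A) - c • choi m n L).PosSemidef) : L = krausMap A := by
  classical
  obtain ⟨k, B, rfl, hB⟩ := hL.exists_krausMap
  simp only [choi_krausMap] at h
  obtain ⟨G, hG⟩ := exists_eq_mul_of_posSemidef_sub hc h
  have hGG : G * Gᴴ = 1 := hA.mul_conjTranspose_eq_one hG (hB.trans hA_one.symm)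
  apply choi_injective
  calc choi m n (krausMap B) = krausStack A * (G * Gᴴ) * (krausStack A)ᴴ := by
        simp only [choi_krausMap, hG, Matrix.conjTranspose_mul, Matrix.mul_assoc]
    _ = choi m n (krausMap A) := by rw [hGG, Matrix.mul_one, choi_krausMap]

lemma eq_krausMap_of_eq_add (hA : KrausIndependent A) (hA_one : ∑ a, (A a)ᴴ * A a = 1)
    {L₁ L₂ : Matrix (Fin m) (Fin m) ℂ →ₗ[ℂ] Matrix (Fin n) (Fin n) ℂ}
    (h₁ : IsChannel m n L₁) (h₂ : IsChannel m n L₂) {t s : ℝ} (ht : 0 < t) (hs : 0 ≤ s)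
    (h : krausMap A = (t : ℂ) • L₁ + (s : ℂ) • L₂) : L₁ = krausMap A := by
  have hchoi : choi m n (krausMap A) - (t : ℂ) • choi m n L₁ = (s : ℂ) • choi m n L₂ := by
    ext
    simp [choi, h]
  refine hA.eq_krausMap_of_posSemidef_sub hA_one h₁ (c := t) (by exact_mod_cast ht) ?_
  rw [hchoi]
  exact h₂.posSemidef_choi.smul (by exact_mod_cast hs)

lemma isExtremeChannel_krausMap (hA : KrausIndependent A) (hA_one : ∑ a, (A a)ᴴ * A a = 1) :
    IsExtremeChannel m n (krausMap A) := by
  refine ⟨isChannel_krausMap hA_one, fun L₁ L₂ h₁ h₂ t ht₀ ht₁ h => ?_⟩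
  have ht₁' : 0 < 1 - t := sub_pos.2 ht₁
  exact ⟨hA.eq_krausMap_of_eq_add hA_one h₁ h₂ ht₀ ht₁'.le h,
    hA.eq_krausMap_of_eq_add hA_one h₂ h₁ ht₁' ht₀.le (h.trans (add_comm _ _))⟩

end KrausIndependent

end Channel

/-- for `⌈m / min(m,n)⌉ ≤ k ≤ m` (encoded as `m ≤ k·min(m,n)` and `k ≤ m`), the
extreme points of `L_{m,n}` lying in `L_{m,n,k}` are dense in `L_{m,n,k}`. -/
theorem stmt10 (m n k : ℕ) (hm : 2 ≤ m) (hn : 2 ≤ n)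
    (hk1 : m ≤ k * min m n) (hk2 : k ≤ m)
    (L : Matrix (Fin m) (Fin m) ℂ →ₗ[ℂ] Matrix (Fin n) (Fin n) ℂ)
    (hL : IsChannel m n L) (hrank : (choi m n L).rank ≤ k) :
    ∀ ε : ℝ, 0 < ε →
      ∃ L' : Matrix (Fin m) (Fin m) ℂ →ₗ[ℂ] Matrix (Fin n) (Fin n) ℂ,
        IsExtremeChannel m n L' ∧ (choi m n L').rank ≤ k ∧
        ‖choi m n L' - choi m n L‖ < ε := by
  intro ε hε
  have : Nonempty (Fin n) := ⟨⟨0, by omega⟩⟩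
  obtain ⟨A, rfl, hA⟩ := hL.exists_krausMap_of_rank_le (κ := Fin k) (by rwa [Fintype.card_fin])
  have hclosure := map_mem_closure continuous_choi_krausMap
    (mem_closure_krausIndependent (Fin.castLEEmb hk2) hA) (Set.mapsTo_image _ _)
  obtain ⟨_, ⟨B, ⟨hB, hB_one⟩, rfl⟩, hdist⟩ := Metric.mem_closure_iff.1 hclosure ε hε
  refine ⟨krausMap B, hB.isExtremeChannel_krausMap hB_one, ?_, ?_⟩
  · simpa only [Fintype.card_fin] using rank_choi_krausMap_le B
  · rwa [← dist_eq_norm, dist_comm]
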